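/- arXiv:2604.23140 — 3 statements merged into one kernel-verified Lean document; each statement's English description precedes it below -/
import Mathlib

section
/- Let n, R, m₀ be finite types; let c̃ : n → ℝ with 0 ≤ c̃ (reduced production costs), cU : R → ℝ with 0 ≤ cU (unit penalty costs), λ ≥ 0 (service level), D : Matrix R n ℝ (demand-assignment matrix), A : Matrix m₀ n ℝ and b : m₀ → ℝ (demand-independent constraints). For ξ : R → ℝ define the feasible set F(ξ) = {y : n → ℝ | 0 ≤ y ∧ D.mulVec y ≥ λ • ξ ∧ A.mulVec y ≥ b} (all inequalities componentwise) and the recourse value Q(ξ) = sInf {c̃ ⬝ᵥ y + cU ⬝ᵥ ξ | y ∈ F(ξ)}. If ξ ≤ ξ' componentwise and F(ξ') is nonempty, then Q(ξ) ≤ Q(ξ'). (This is the monotonicity assertion of the paper's Proposition 3: after eliminating the unmet-demand variables, the second-stage recourse function is monotonically non-decreasing in each demand coordinate.) -/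
open Matrix

/-- Proposition 3 (monotonicity): after eliminating the unmet-demand variables,
the second-stage recourse value is monotonically non-decreasing in the demand. -/
theorem recourse_monotone
    {n R m₀ : Type*} [Fintype n] [Fintype R] [Fintype m₀]
    (ctilde : n → ℝ) (hc : 0 ≤ ctilde) (cU : R → ℝ) (hcU : 0 ≤ cU)
    (lam : ℝ) (hlam : 0 ≤ lam)
    (D : Matrix R n ℝ) (A : Matrix m₀ n ℝ) (b : m₀ → ℝ)
    (ξ ξ' : R → ℝ) (hξ : ξ ≤ ξ')
    (hne : ∃ y : n → ℝ, 0 ≤ y ∧ lam • ξ' ≤ D.mulVec y ∧ b ≤ A.mulVec y) :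
    sInf {v : ℝ | ∃ y : n → ℝ,
        (0 ≤ y ∧ lam • ξ ≤ D.mulVec y ∧ b ≤ A.mulVec y) ∧ v = ctilde ⬝ᵥ y + cU ⬝ᵥ ξ} ≤
      sInf {v : ℝ | ∃ y : n → ℝ,
        (0 ≤ y ∧ lam • ξ' ≤ D.mulVec y ∧ b ≤ A.mulVec y) ∧ v = ctilde ⬝ᵥ y + cU ⬝ᵥ ξ'} := by
  obtain ⟨y₀, hy₀⟩ := hne
  refine le_csInf ⟨_, y₀, hy₀, rfl⟩ ?_
  rintro v ⟨y, ⟨h0, hD, hA⟩, rfl⟩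
  have hU : cU ⬝ᵥ ξ ≤ cU ⬝ᵥ ξ' :=
    Finset.sum_le_sum fun i _ => mul_le_mul_of_nonneg_left (hξ i) (hcU i)
  have hl : lam • ξ ≤ lam • ξ' := fun i => mul_le_mul_of_nonneg_left (hξ i) hlam
  refine le_trans (csInf_le ?_ ⟨y, ⟨h0, hl.trans hD, hA⟩, rfl⟩) (by linarith)
  refine ⟨cU ⬝ᵥ ξ, ?_⟩
  rintro v ⟨z, ⟨hz, -, -⟩, rfl⟩
  have : 0 ≤ ctilde ⬝ᵥ z := Finset.sum_nonneg fun i _ => mul_nonneg (hc i) (hz i)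
  linarith
end

section
/- Let m, n be finite types, A : Matrix m n ℝ, c : n → ℝ, and b₁ b₂ : m → ℝ, and let θ ∈ [0, 1]. Define F(b) = {y : n → ℝ | 0 ≤ y ∧ A.mulVec y ≥ b} and V(b) = sInf {c ⬝ᵥ y | y ∈ F(b)}. Suppose F(b₁) and F(b₂) are nonempty and the sets {c ⬝ᵥ y | y ∈ F(b₁)}, {c ⬝ᵥ y | y ∈ F(b₂)}, and {c ⬝ᵥ y | y ∈ F(θ • b₁ + (1−θ) • b₂)} are bounded below. Then V(θ • b₁ + (1−θ) • b₂) ≤ θ · V(b₁) + (1−θ) · V(b₂). (Convexity of the optimal value of a linear program as a function of its right-hand side; together with monotonicity this yields the piecewise-linear, non-decreasing behaviour of the recourse function asserted in the paper's Proposition 3.) -/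
open Matrix

/-- Convexity of the optimal value of a linear program in its right-hand side. -/
theorem lp_value_convex_rhs
    {m n : Type*} [Fintype m] [Fintype n]
    (A : Matrix m n ℝ) (c : n → ℝ) (b₁ b₂ : m → ℝ)
    (θ : ℝ) (hθ : θ ∈ Set.Icc (0 : ℝ) 1)
    (hne₁ : ∃ y : n → ℝ, 0 ≤ y ∧ b₁ ≤ A.mulVec y)
    (hne₂ : ∃ y : n → ℝ, 0 ≤ y ∧ b₂ ≤ A.mulVec y)
    (hbdd₁ : BddBelow {v : ℝ | ∃ y : n → ℝ, (0 ≤ y ∧ b₁ ≤ A.mulVec y) ∧ v = c ⬝ᵥ y})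
    (hbdd₂ : BddBelow {v : ℝ | ∃ y : n → ℝ, (0 ≤ y ∧ b₂ ≤ A.mulVec y) ∧ v = c ⬝ᵥ y})
    (hbddθ : BddBelow {v : ℝ | ∃ y : n → ℝ,
      (0 ≤ y ∧ θ • b₁ + (1 - θ) • b₂ ≤ A.mulVec y) ∧ v = c ⬝ᵥ y}) :
    sInf {v : ℝ | ∃ y : n → ℝ,
        (0 ≤ y ∧ θ • b₁ + (1 - θ) • b₂ ≤ A.mulVec y) ∧ v = c ⬝ᵥ y} ≤
      θ * sInf {v : ℝ | ∃ y : n → ℝ, (0 ≤ y ∧ b₁ ≤ A.mulVec y) ∧ v = c ⬝ᵥ y} +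
        (1 - θ) * sInf {v : ℝ | ∃ y : n → ℝ, (0 ≤ y ∧ b₂ ≤ A.mulVec y) ∧ v = c ⬝ᵥ y} := by
  obtain ⟨h0, h1⟩ := hθ
  have h1' : 0 ≤ 1 - θ := by linarith
  obtain ⟨z₁, hz₁⟩ := hne₁
  obtain ⟨z₂, hz₂⟩ := hne₂
  refine le_of_forall_pos_le_add fun ε hε => ?_
  obtain ⟨v₁, ⟨y₁, ⟨hy₁, hA₁⟩, rfl⟩, hv₁⟩ :=
    Real.lt_sInf_add_pos (s := {v : ℝ | ∃ y : n → ℝ, (0 ≤ y ∧ b₁ ≤ A.mulVec y) ∧ v = c ⬝ᵥ y})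
      ⟨_, z₁, hz₁, rfl⟩ hε
  obtain ⟨v₂, ⟨y₂, ⟨hy₂, hA₂⟩, rfl⟩, hv₂⟩ :=
    Real.lt_sInf_add_pos (s := {v : ℝ | ∃ y : n → ℝ, (0 ≤ y ∧ b₂ ≤ A.mulVec y) ∧ v = c ⬝ᵥ y})
      ⟨_, z₂, hz₂, rfl⟩ hε
  have key := csInf_le hbddθ (a := c ⬝ᵥ (θ • y₁ + (1 - θ) • y₂))
    ⟨θ • y₁ + (1 - θ) • y₂,
      ⟨add_nonneg (smul_nonneg h0 hy₁) (smul_nonneg h1' hy₂), by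
        rw [Matrix.mulVec_add, Matrix.mulVec_smul, Matrix.mulVec_smul]
        exact add_le_add (smul_le_smul_of_nonneg_left hA₁ h0)
          (smul_le_smul_of_nonneg_left hA₂ h1')⟩, rfl⟩
  refine key.trans ?_
  rw [dotProduct_add, dotProduct_smul, dotProduct_smul, smul_eq_mul, smul_eq_mul]
  have e₁ := mul_le_mul_of_nonneg_left hv₁.le h0
  have e₂ := mul_le_mul_of_nonneg_left hv₂.le h1'
  linarith
end

section
/- Let ι be a finite type, L U : ι → ℝ with L i ≤ U i for all i, and let g : (ι → ℝ) → ℝ be convex on Set.Icc L U. Let ξ : Fin m → (ι → ℝ) with ξ i ∈ Set.Icc L U for each i, and p : Fin m → ℝ with 0 ≤ p and ∑ i, p i = 1. Then there exist m' : ℕ, vertex scenarios ζ : Fin m' → (ι → ℝ) with ζ j ∈ Set.Icc L U and ζ j i = L i or ζ j i = U i for every i, and weights w : Fin m' → ℝ with 0 ≤ w and ∑ j, w j = 1, such that ∑ j, w j • ζ j = ∑ i, p i • ξ i (the mean is preserved) and ∑ j, w j * g(ζ j) ≥ ∑ i, p i * g(ξ i). (This is the mathematical content of the paper's Corollary 1: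 for the worst-case expectation of a convex recourse function under first-moment constraints, distributions supported on the vertices ξ^s(z) = ξ^{Ls} + ⟨ξ^{Us} − ξ^{Ls}, z⟩, z ∈ {0,1}^{|K|×|T|}, of the box suffice.) -/
/-- Corollary 1: for the worst-case expectation of a convex recourse function
under first-moment constraints, distributions supported on the vertices of the
box suffice: any finitely supported distribution can be replaced by one supported
on vertices with the same mean and a weakly larger expected value. -/
theorem vertex_supported_distribution_suffices
    {ι : Type*} [Fintype ι]
    (L U : ι → ℝ) (hLU : ∀ i, L i ≤ U i)
    (g : (ι → ℝ) → ℝ) (hg : ConvexOn ℝ (Set.Icc L U) g)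
    (m : ℕ) (ξ : Fin m → ι → ℝ) (hξ : ∀ i, ξ i ∈ Set.Icc L U)
    (p : Fin m → ℝ) (hp : 0 ≤ p) (hsum : ∑ i, p i = 1) :
    ∃ (m' : ℕ) (ζ : Fin m' → ι → ℝ) (w : Fin m' → ℝ),
      (∀ j, ζ j ∈ Set.Icc L U) ∧ (∀ j i, ζ j i = L i ∨ ζ j i = U i) ∧
      0 ≤ w ∧ (∑ j, w j) = 1 ∧
      (∑ j, w j • ζ j) = (∑ i, p i • ξ i) ∧
      (∑ i, p i * g (ξ i)) ≤ (∑ j, w j * g (ζ j)) := by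
  have key : ∀ x ∈ Set.Icc L U, ∃ (κ : Type) (_ : Fintype κ) (w : κ → ℝ) (z : κ → ι → ℝ),
      (∀ k, 0 ≤ w k) ∧ ∑ k, w k = 1 ∧
      (∀ k, z k ∈ Set.univ.pi fun i => ({L i, U i} : Set ℝ)) ∧ ∑ k, w k • z k = x := by
    intro x hx
    rw [← mem_convexHull_iff_exists_fintype]
    apply mem_convexHull_pi
    intro i _
    rw [convexHull_pair, segment_eq_Icc (hLU i)]
    exact ⟨hx.1 i, hx.2 i⟩
  choose κ inst w z hw0 hw1 hz hx using fun i => key (ξ i) (hξ i)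
  have hv : ∀ i k j, z i k j = L j ∨ z i k j = U j := by
    intro i k j
    simpa using hz i k j (Set.mem_univ j)
  have hbox : ∀ i k, z i k ∈ Set.Icc L U := by
    intro i k
    refine ⟨fun j => ?_, fun j => ?_⟩ <;> rcases hv i k j with h | h <;> simp [h, hLU j]
  let e := (Fintype.equivFin (Σ i, κ i)).symm
  refine ⟨Fintype.card (Σ i, κ i), fun j => z (e j).1 (e j).2,
    fun j => p (e j).1 * w (e j).1 (e j).2, fun j => hbox _ _, fun j i => hv _ _ _,
    fun j => mul_nonneg (hp _) (hw0 _ _), ?_, ?_, ?_⟩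
  · rw [e.sum_comp (fun a => p a.1 * w a.1 a.2), Fintype.sum_sigma]
    simp only [← Finset.mul_sum, hw1, mul_one, hsum]
  · rw [e.sum_comp (fun a => (p a.1 * w a.1 a.2) • z a.1 a.2), Fintype.sum_sigma]
    simp only [mul_smul, ← Finset.smul_sum, hx]
  · rw [e.sum_comp (fun a => (p a.1 * w a.1 a.2) * g (z a.1 a.2)), Fintype.sum_sigma]
    simp only [mul_assoc, ← Finset.mul_sum]
    refine Finset.sum_le_sum fun i _ => mul_le_mul_of_nonneg_left ?_ (hp i)
    have := hg.map_sum_le (t := Finset.univ) (w := w i) (p := z i)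
      (fun k _ => hw0 i k) (hw1 i) (fun k _ => hbox i k)
    rw [hx] at this
    simpa using this
end
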